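/- If λ is nonincreasing with λ_p > 0, then the function G : ℝ → ℝ has exactly one minimizer over ℝ. -/

import Mathlib

open Finset Filter

noncomputable section

/-- The sign of a real number, with the convention `sgn 0 = 1`. -/
def sgn (t : ℝ) : ℝ := if t < 0 then -1 else 1

/-- A permutation sorting the absolute values of `β` in nonincreasing order. -/
def sortPerm {p : ℕ} (β : Fin p → ℝ) : Equiv.Perm (Fin p) :=
  (Fin.revPerm).trans (Tuple.sort fun j => |β j|)

/-- The sorted ℓ₁ norm `J(β) = Σ_j λ_j |β|_(j)`. -/
def sortedL1 {p : ℕ} (lam β : Fin p → ℝ) : ℝ :=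
  ∑ j, lam j * |β (sortPerm β j)|

/-- `β(z)`: the vector obtained from `β` by replacing entries of the cluster
`{i : |β i| = ck}` by `sign(β i) * z`. -/
def cupd {p : ℕ} (β : Fin p → ℝ) (ck z : ℝ) : Fin p → ℝ :=
  fun i => if |β i| = ck then sgn (β i) * z else β i

/-- The partial sorted ℓ₁ norm `H(z) = J(β(z))`. -/
def Hfun {p : ℕ} (lam β : Fin p → ℝ) (ck : ℝ) (z : ℝ) : ℝ :=
  sortedL1 lam (cupd β ck z)

/-- `S(w) = Σ_{j ∈ C(w)} λ_{(j)⁻_w}`, where `C(w) = {j : |β(w)_j| = |w|}`. -/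
def Sval {p : ℕ} (lam β : Fin p → ℝ) (ck : ℝ) (w : ℝ) : ℝ :=
  ∑ j, if |cupd β ck w j| = |w| then lam ((sortPerm (cupd β ck w))⁻¹ j) else 0

/-- squared Euclidean norm -/
def sqnorm {n : ℕ} (v : Fin n → ℝ) : ℝ := ∑ i, (v i) ^ 2

/-- `G(z) = (1/2)‖y − Xβ(z)‖² + H(z)`. -/
def Gfun {n p : ℕ} (lam : Fin p → ℝ) (X : Matrix (Fin n) (Fin p) ℝ) (y : Fin n → ℝ)
    (β : Fin p → ℝ) (ck : ℝ) (z : ℝ) : ℝ :=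
  (1/2) * sqnorm (fun i => y i - ∑ j, X i j * cupd β ck z j) + Hfun lam β ck z

/-- `x̃ = Σ_{j ∈ C_k} sign(β_j) X_{:j}`. -/
def xtil {n p : ℕ} (X : Matrix (Fin n) (Fin p) ℝ) (β : Fin p → ℝ) (ck : ℝ) : Fin n → ℝ :=
  fun i => ∑ j, if |β j| = ck then sgn (β j) * X i j else 0

/-- `γ = c_k ω + x̃ᵀ r` where `r = y − Xβ` and `ω = ‖x̃‖²`. -/
def gam {n p : ℕ} (X : Matrix (Fin n) (Fin p) ℝ) (y : Fin n → ℝ) (β : Fin p → ℝ) (ck : ℝ) : ℝ :=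
  ck * sqnorm (xtil X β ck) + ∑ i, xtil X β ck i * (y i - ∑ j, X i j * β j)

end

/-!
By the rearrangement inequality, `J` is the maximum of the weighted `ℓ₁` norms `∑ j, λ_j |β_(σ j)|`
over all permutations `σ`, so `H` is convex. Since `β(z)` is affine in `z`, with direction the
signed indicator of the cluster, the least-squares term is a quadratic in `z` with leading
coefficient `‖x̃‖² / 2`. If `x̃ ≠ 0`, then `G` is strongly convex and coercive. If `x̃ = 0`, then
`G` differs from `H` by a constant. The vanishing entries of `β(0)` carry the total weight `S(0)`,
which is positive when `λ_p > 0`. One of them then has a positive weight, and moving the cluster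
away from `0` picks up that weight, so `H` has a strict minimum at `0`.
-/

theorem existsUnique_forall_le_of_strictConvexOn {E : Type*} [NormedAddCommGroup E]
    [NormedSpace ℝ E] [FiniteDimensional ℝ E] {f : E → ℝ} (hf : StrictConvexOn ℝ Set.univ f)
    (hlim : Tendsto f (cocompact E) atTop) : ∃! x, ∀ y, f x ≤ f y := by
  have hcont : Continuous f := hf.convexOn.locallyLipschitz.continuous
  obtain ⟨x, hx⟩ := hcont.exists_forall_le hlim
  exact ⟨x, hx, fun y hy => hf.eq_of_isMinOn (fun w _ => hy w) (fun w _ => hx w)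
    (Set.mem_univ y) (Set.mem_univ x)⟩

section SortedL1

variable {p : ℕ} {lam : Fin p → ℝ}

theorem antitone_abs_comp_sortPerm (β : Fin p → ℝ) : Antitone fun j => |β (sortPerm β j)| :=
  fun _ _ h => Tuple.monotone_sort (fun j => |β j|) (Fin.rev_le_rev.mpr h)

theorem sum_mul_abs_comp_perm_le_sortedL1 (hlam : Antitone lam) (β : Fin p → ℝ)
    (σ : Equiv.Perm (Fin p)) : ∑ j, lam j * |β (σ j)| ≤ sortedL1 lam β := by
  simpa [sortedL1] using
    (hlam.monovary (antitone_abs_comp_sortPerm β)).sum_mul_comp_perm_le_sum_mul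
      (σ := σ.trans (sortPerm β).symm)

theorem sortedL1_nonneg (hlam_nonneg : ∀ j, 0 ≤ lam j) (β : Fin p → ℝ) : 0 ≤ sortedL1 lam β :=
  sum_nonneg fun j _ => mul_nonneg (hlam_nonneg j) (abs_nonneg _)

theorem convexOn_sortedL1 (hlam : Antitone lam) (hlam_nonneg : ∀ j, 0 ≤ lam j) :
    ConvexOn ℝ Set.univ (sortedL1 lam) := by
  refine ⟨convex_univ, fun x _ y _ a b ha hb _ => ?_⟩
  let σ := sortPerm (a • x + b • y)
  have habs (i : Fin p) : |a * x i + b * y i| ≤ a * |x i| + b * |y i| := by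
    simpa [abs_mul, abs_of_nonneg ha, abs_of_nonneg hb] using abs_add_le (a * x i) (b * y i)
  calc sortedL1 lam (a • x + b • y)
      = ∑ j, lam j * |a * x (σ j) + b * y (σ j)| := rfl
    _ ≤ ∑ j, lam j * (a * |x (σ j)| + b * |y (σ j)|) := by
        gcongr with j
        exacts [hlam_nonneg j, habs (σ j)]
    _ = a * ∑ j, lam j * |x (σ j)| + b * ∑ j, lam j * |y (σ j)| := by
        simp only [mul_sum, ← sum_add_distrib]
        exact sum_congr rfl fun j _ => by ring
    _ ≤ a * sortedL1 lam x + b * sortedL1 lam y := by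
        gcongr <;> exact sum_mul_abs_comp_perm_le_sortedL1 hlam _ σ

end SortedL1

section ClusterUpdate

variable {p : ℕ} (β : Fin p → ℝ) (ck : ℝ)

theorem abs_sgn (t : ℝ) : |sgn t| = 1 := by
  unfold sgn
  split_ifs <;> simp

variable {β ck} in
theorem abs_cupd_of_abs_eq {i : Fin p} (hi : |β i| = ck) (z : ℝ) : |cupd β ck z i| = |z| := by
  simp [cupd, hi, abs_mul, abs_sgn]

theorem abs_cupd_zero_le (z : ℝ) (i : Fin p) : |cupd β ck 0 i| ≤ |cupd β ck z i| := by
  unfold cupd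
  split_ifs <;> simp [abs_sgn]

theorem cupd_combo {a b : ℝ} (hab : a + b = 1) (z w : ℝ) :
    cupd β ck (a * z + b * w) = a • cupd β ck z + b • cupd β ck w := by
  ext i
  simp only [cupd, Pi.add_apply, Pi.smul_apply, smul_eq_mul]
  split_ifs
  · ring
  · rw [← add_mul, hab, one_mul]

theorem sum_mul_cupd {n : ℕ} (X : Matrix (Fin n) (Fin p) ℝ) (z : ℝ) (i : Fin n) :
    ∑ j, X i j * cupd β ck z j = ∑ j, X i j * cupd β ck 0 j + z * xtil X β ck i := by
  rw [xtil, mul_sum, ← sum_add_distrib]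
  refine sum_congr rfl fun j _ => ?_
  unfold cupd
  split_ifs <;> ring

end ClusterUpdate

section PartialNorm

variable {p : ℕ} {lam : Fin p → ℝ} {β : Fin p → ℝ} {ck : ℝ}

theorem convexOn_Hfun (hlam : Antitone lam) (hlam_nonneg : ∀ j, 0 ≤ lam j) (β : Fin p → ℝ)
    (ck : ℝ) : ConvexOn ℝ Set.univ (Hfun lam β ck) := by
  refine ⟨convex_univ, fun z _ w _ a b ha hb hab => ?_⟩
  simp only [Hfun, smul_eq_mul, cupd_combo β ck hab]
  exact (convexOn_sortedL1 hlam hlam_nonneg).2 (Set.mem_univ _) (Set.mem_univ _) ha hb hab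

theorem Hfun_zero_add_mul_abs_le (hlam : Antitone lam) (hlam_nonneg : ∀ j, 0 ≤ lam j)
    {i l : Fin p} (hi : |β i| = ck) (hl : cupd β ck 0 l = 0) (z : ℝ) :
    Hfun lam β ck 0 + lam ((sortPerm (cupd β ck 0))⁻¹ l) * |z| ≤ Hfun lam β ck z := by
  let σ := sortPerm (cupd β ck 0)
  -- Entries `i` and `l` of `β(0)` both vanish, so `i` may take the rank of `l`.
  let τ := σ.trans (Equiv.swap i l)
  have hi0 : cupd β ck 0 i = 0 := by simpa using abs_cupd_of_abs_eq hi 0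
  have hτ (j : Fin p) : cupd β ck 0 (τ j) = cupd β ck 0 (σ j) := by
    change cupd β ck 0 (Equiv.swap i l (σ j)) = _
    rw [Equiv.swap_apply_def]
    split_ifs with h h <;> simp [h, hi0, hl]
  have hterm (j : Fin p) : lam j * |cupd β ck 0 (σ j)| + (if j = σ⁻¹ l then lam j * |z| else 0)
      ≤ lam j * |cupd β ck z (τ j)| := by
    split_ifs with hj
    · have hτj : τ j = i := by simp [τ, hj]
      rw [← hτ, hτj, hi0, abs_cupd_of_abs_eq hi, abs_zero, mul_zero, zero_add]
    · rw [add_zero, ← hτ]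
      exact mul_le_mul_of_nonneg_left (abs_cupd_zero_le β ck z _) (hlam_nonneg j)
  calc Hfun lam β ck 0 + lam (σ⁻¹ l) * |z|
      = ∑ j, (lam j * |cupd β ck 0 (σ j)| + (if j = σ⁻¹ l then lam j * |z| else 0)) := by
        rw [sum_add_distrib, sum_ite_eq' univ (σ⁻¹ l), if_pos (mem_univ _)]
        rfl
    _ ≤ ∑ j, lam j * |cupd β ck z (τ j)| := sum_le_sum fun j _ => hterm j
    _ ≤ Hfun lam β ck z := sum_mul_abs_comp_perm_le_sortedL1 hlam _ τ

theorem Hfun_zero_lt (hlam : Antitone lam) (hlam_nonneg : ∀ j, 0 ≤ lam j)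
    (hck : ∃ i, |β i| = ck) (hS : 0 < Sval lam β ck 0) {z : ℝ} (hz : z ≠ 0) :
    Hfun lam β ck 0 < Hfun lam β ck z := by
  obtain ⟨i, hi⟩ := hck
  obtain ⟨l, -, hl⟩ := exists_ne_zero_of_sum_ne_zero hS.ne'
  obtain ⟨hl0, hlaml⟩ := ite_ne_right_iff.mp hl
  have hgrow := Hfun_zero_add_mul_abs_le hlam hlam_nonneg hi (by simpa using hl0) z
  have hpos := mul_pos ((hlam_nonneg _).lt_of_ne' hlaml) (abs_pos.mpr hz)
  linarith

theorem Sval_zero_pos (hlam_pos : ∀ j, 0 < lam j) (hck : ∃ i, |β i| = ck) :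
    0 < Sval lam β ck 0 := by
  obtain ⟨i, hi⟩ := hck
  refine sum_pos' (fun j _ => ?_) ⟨i, mem_univ i, ?_⟩
  · split_ifs
    exacts [(hlam_pos _).le, le_rfl]
  · rw [if_pos (abs_cupd_of_abs_eq hi 0)]
    exact hlam_pos _

end PartialNorm

section Objective

theorem sq_le_sqnorm {n : ℕ} (v : Fin n → ℝ) (i : Fin n) : v i ^ 2 ≤ sqnorm v :=
  single_le_sum (f := fun i => v i ^ 2) (fun j _ => sq_nonneg (v j)) (mem_univ i)

theorem sqnorm_pos {n : ℕ} {v : Fin n → ℝ} (hv : v ≠ 0) : 0 < sqnorm v := by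
  obtain ⟨i, hi⟩ := Function.ne_iff.mp hv
  exact (sq_pos_of_ne_zero hi).trans_le (sq_le_sqnorm v i)

theorem sqnorm_sub_smul {n : ℕ} (v w : Fin n → ℝ) (z : ℝ) :
    sqnorm (v - z • w) = sqnorm v - 2 * z * (v ⬝ᵥ w) + z ^ 2 * sqnorm w := by
  simp only [sqnorm, dotProduct, mul_sum, ← sum_sub_distrib, ← sum_add_distrib]
  exact sum_congr rfl fun i _ => by simp only [Pi.sub_apply, Pi.smul_apply, smul_eq_mul]; ring

variable {n p : ℕ} {lam : Fin p → ℝ} (X : Matrix (Fin n) (Fin p) ℝ) (y : Fin n → ℝ)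
  (β : Fin p → ℝ) (ck : ℝ)

variable (lam) in
theorem Gfun_eq_sqnorm_sub_smul_xtil (z : ℝ) :
    Gfun lam X y β ck z =
      1 / 2 * sqnorm ((fun i => y i - ∑ j, X i j * cupd β ck 0 j) - z • xtil X β ck)
        + Hfun lam β ck z := by
  have hres : (fun i => y i - ∑ j, X i j * cupd β ck z j) =
      (fun i => y i - ∑ j, X i j * cupd β ck 0 j) - z • xtil X β ck := by
    ext i
    simp only [sum_mul_cupd β ck X z, Pi.sub_apply, Pi.smul_apply, smul_eq_mul]
    ring
  rw [Gfun, hres]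

theorem strongConvexOn_Gfun (hlam : Antitone lam) (hlam_nonneg : ∀ j, 0 ≤ lam j) :
    StrongConvexOn Set.univ (sqnorm (xtil X β ck)) (Gfun lam X y β ck) := by
  set r : Fin n → ℝ := fun i => y i - ∑ j, X i j * cupd β ck 0 j with hr
  have haffine : ConvexOn ℝ Set.univ fun z : ℝ => 1 / 2 * sqnorm r - z * (r ⬝ᵥ xtil X β ck) :=
    ⟨convex_univ, fun z _ w _ a b _ _ hab => le_of_eq <| by
      simp only [smul_eq_mul]
      linear_combination (-(1 / 2 * sqnorm r)) * hab⟩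
  refine strongConvexOn_iff_convex.mpr
    ((haffine.add (convexOn_Hfun hlam hlam_nonneg β ck)).congr fun z _ => ?_)
  simp only [Pi.add_apply, Gfun_eq_sqnorm_sub_smul_xtil, ← hr, sqnorm_sub_smul, Real.norm_eq_abs,
    sq_abs]
  ring

variable {X β ck} in
theorem tendsto_Gfun_cocompact_atTop (hlam_nonneg : ∀ j, 0 ≤ lam j) (hx : xtil X β ck ≠ 0) :
    Tendsto (Gfun lam X y β ck) (cocompact ℝ) atTop := by
  obtain ⟨i, hi : xtil X β ck i ≠ 0⟩ := Function.ne_iff.mp hx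
  set r : Fin n → ℝ := fun i => y i - ∑ j, X i j * cupd β ck 0 j with hr
  have hcocompact : Tendsto (fun z => r i - z * xtil X β ck i) (cocompact ℝ) (cocompact ℝ) :=
    ((Homeomorph.mulRight₀ _ hi).trans
      (Homeomorph.subLeft (r i))).isClosedEmbedding.tendsto_cocompact
  have hnorm := tendsto_norm_cocompact_atTop.comp hcocompact
  have hsq := ((tendsto_pow_atTop two_ne_zero).comp hnorm).const_mul_atTop one_half_pos
  refine tendsto_atTop_mono (fun z => ?_) hsq
  have hcoord := sq_le_sqnorm (r - z • xtil X β ck) i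
  have hH : 0 ≤ Hfun lam β ck z := sortedL1_nonneg hlam_nonneg _
  simp only [Function.comp_apply, Real.norm_eq_abs, sq_abs, Gfun_eq_sqnorm_sub_smul_xtil, ← hr]
  simp only [Pi.sub_apply, Pi.smul_apply, smul_eq_mul] at hcoord
  linarith

variable {X y β ck}

theorem Gfun_zero_lt (hlam : Antitone lam) (hlam_nonneg : ∀ j, 0 ≤ lam j)
    (hck : ∃ i, |β i| = ck) (hx : xtil X β ck = 0) (hS : 0 < Sval lam β ck 0) {z : ℝ}
    (hz : z ≠ 0) : Gfun lam X y β ck 0 < Gfun lam X y β ck z := by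
  simpa [Gfun_eq_sqnorm_sub_smul_xtil, hx] using Hfun_zero_lt hlam hlam_nonneg hck hS hz

end Objective

theorem G_has_unique_minimizer_general {n p : ℕ} {lam : Fin p → ℝ} (hlam : Antitone lam)
    (hlam_nonneg : ∀ j, 0 ≤ lam j) {β : Fin p → ℝ} {ck : ℝ} (hck : ∃ j, |β j| = ck)
    (X : Matrix (Fin n) (Fin p) ℝ) (y : Fin n → ℝ)
    (hS : xtil X β ck = 0 → 0 < Sval lam β ck 0) :
    ∃! z : ℝ, ∀ w : ℝ, Gfun lam X y β ck z ≤ Gfun lam X y β ck w := by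
  by_cases hx : xtil X β ck = 0
  · have hlt {z : ℝ} (hz : z ≠ 0) : Gfun lam X y β ck 0 < Gfun lam X y β ck z :=
      Gfun_zero_lt hlam hlam_nonneg hck hx (hS hx) hz
    refine ⟨0, fun w => ?_, fun z hz => by_contra fun hne => (hlt hne).not_ge (hz 0)⟩
    rcases eq_or_ne w 0 with rfl | hw
    exacts [le_rfl, (hlt hw).le]
  · exact existsUnique_forall_le_of_strictConvexOn
      ((strongConvexOn_Gfun X y β ck hlam hlam_nonneg).strictConvexOn (sqnorm_pos hx))
      (tendsto_Gfun_cocompact_atTop y hlam_nonneg hx)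

/-- if `λ` is nonincreasing with `λ_p > 0`, then `G` has exactly one
minimizer over ℝ. -/
theorem G_has_unique_minimizer
    {n p m : ℕ} (hn : 0 < n) (hp : 0 < p) (hm : 0 < m)
    (lam : Fin p → ℝ)
    (hlam_mono : ∀ i j : Fin p, i ≤ j → lam j ≤ lam i)
    (hlam_nonneg : ∀ j, 0 ≤ lam j)
    (β : Fin p → ℝ) (c : Fin m → ℝ)
    (hc_anti : StrictAnti c) (hc_nonneg : ∀ i, 0 ≤ c i)
    (h_attain : ∀ i, ∃ j, |β j| = c i)
    (h_cover : ∀ j, ∃ i, |β j| = c i)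
    (k : Fin m)
    (ε : ℝ) (hε_pos : 0 < ε)
    (hε_sep : ∀ i j, i ≠ j → ε < |c i - c j|)
    (hε_min : ∀ i, c i ≠ 0 → ε < c i)
    (X : Matrix (Fin n) (Fin p) ℝ) (y : Fin n → ℝ)
    (hlam_last : 0 < lam ⟨p - 1, by omega⟩) :
    ∃! z : ℝ, ∀ w : ℝ, Gfun lam X y β (c k) z ≤ Gfun lam X y β (c k) w := by
  have hlam_pos (j : Fin p) : 0 < lam j :=
    hlam_last.trans_le (hlam_mono j _ (Fin.le_def.mpr (Nat.le_sub_one_of_lt j.isLt)))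
  exact G_has_unique_minimizer_general (fun i j h => hlam_mono i j h) hlam_nonneg (h_attain k) X y
    fun _ => Sval_zero_pos hlam_pos (h_attain k)
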